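/- Let K ≥ 3 be an integer and suppose x₀ > 0 satisfies x₀ = ((K−2)/2) · φ(x₀)/Φ(x₀). Then −x₀² + (K−2)·log Φ(x₀) > −(K−2)²/(2π) − (K−2)·log 2, and moreover 1 + (K(K−2)/4)·(φ(x₀)/Φ(x₀))² ≤ 1 + K(K−2)/(2π). (The two bounds proved in Corollary 7 (cor_PP), giving the lower bound on the winner-take-all prize pivot.) -/

import Mathlib

/-!
On `[0, ∞)` the density `φ` decreases strictly and `Φ` increases, so for `x > 0` the ratio
`φ x / Φ x` lies strictly below its value `2 / √(2π)` at `0`, while `Φ x ≥ Φ 0 = 1 / 2` by symmetry.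
The square of the fixed-point equation expresses `x₀ ^ 2` through the square of this ratio, which is
less than `2 / π`; both bounds follow.
-/

/-- The standard normal density `φ(x) = (1/√(2π)) e^{-x²/2}`. -/
noncomputable def stdNormalPDF (x : ℝ) : ℝ := (1 / Real.sqrt (2 * Real.pi)) * Real.exp (-x ^ 2 / 2)

/-- The standard normal cumulative distribution function `Φ(x) = ∫_{-∞}^x φ(t) dt`. -/
noncomputable def stdNormalCDF (x : ℝ) : ℝ := ∫ t in Set.Iic x, stdNormalPDF t

open MeasureTheory ProbabilityTheory Real Set
open scoped NNReal

theorem cdf_two_mul_sub_of_map_eq {μ : Measure ℝ} [IsProbabilityMeasure μ] [NullSingletonClass μ]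
    {c : ℝ} (hμ : μ.map (2 * c - ·) = μ) (x : ℝ) : cdf μ (2 * c - x) = 1 - cdf μ x := by
  have preimage_Iic : (2 * c - ·) ⁻¹' Iic (2 * c - x) = Ici x := by
    ext y
    simp
  calc cdf μ (2 * c - x) = (μ.map (2 * c - ·)).real (Iic (2 * c - x)) := by
        rw [hμ, cdf_eq_real]
    _ = μ.real (Ici x) := by
        rw [map_measureReal_apply (by fun_prop) measurableSet_Iic, preimage_Iic]
    _ = μ.real (Iic x)ᶜ := by
        rw [compl_Iic, measureReal_congr Ioi_ae_eq_Ici]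
    _ = 1 - cdf μ x := by
        rw [probReal_compl_eq_one_sub measurableSet_Iic, cdf_eq_real]

theorem cdf_gaussianReal_self (m : ℝ) {v : ℝ≥0} (hv : v ≠ 0) :
    cdf (gaussianReal m v) m = 1 / 2 := by
  have := nullSingletonClass_gaussianReal (μ := m) hv
  have reflection_invariant : (gaussianReal m v).map (2 * m - ·) = gaussianReal m v := by
    rw [gaussianReal_map_const_sub, two_mul, add_sub_cancel_right]
  have symmetry_at_mean := cdf_two_mul_sub_of_map_eq reflection_invariant m
  rw [two_mul, add_sub_cancel_right] at symmetry_at_mean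
  linarith

theorem strictAntiOn_gaussianPDFReal (m : ℝ) {v : ℝ≥0} (hv : v ≠ 0) :
    StrictAntiOn (gaussianPDFReal m v) (Ici m) := by
  intro x hx y _ hxy
  have hx_nonneg : 0 ≤ x - m := sub_nonneg.mpr hx
  unfold gaussianPDFReal
  gcongr

theorem stdNormalPDF_eq_gaussianPDFReal : stdNormalPDF = gaussianPDFReal 0 1 := by
  ext x
  simp [stdNormalPDF, gaussianPDFReal]

theorem stdNormalCDF_eq_cdf_gaussianReal : stdNormalCDF = cdf (gaussianReal 0 1) := by
  ext x
  have cdf_integral_nonneg : 0 ≤ ∫ t in Iic x, gaussianPDFReal 0 1 t :=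
    setIntegral_nonneg measurableSet_Iic fun t _ => gaussianPDFReal_nonneg 0 1 t
  rw [stdNormalCDF, stdNormalPDF_eq_gaussianPDFReal, cdf_eq_real, measureReal_def,
    gaussianReal_apply_eq_integral 0 one_ne_zero, ENNReal.toReal_ofReal cdf_integral_nonneg]

theorem stdNormalPDF_pos (x : ℝ) : 0 < stdNormalPDF x := by
  rw [stdNormalPDF_eq_gaussianPDFReal]
  exact gaussianPDFReal_pos 0 1 x one_ne_zero

theorem stdNormalPDF_zero : stdNormalPDF 0 = 1 / √(2 * π) := by
  simp [stdNormalPDF]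

theorem strictAntiOn_stdNormalPDF : StrictAntiOn stdNormalPDF (Ici 0) := by
  rw [stdNormalPDF_eq_gaussianPDFReal]
  exact strictAntiOn_gaussianPDFReal 0 one_ne_zero

theorem monotone_stdNormalCDF : Monotone stdNormalCDF := by
  rw [stdNormalCDF_eq_cdf_gaussianReal]
  exact monotone_cdf _

theorem stdNormalCDF_zero : stdNormalCDF 0 = 1 / 2 := by
  rw [stdNormalCDF_eq_cdf_gaussianReal, cdf_gaussianReal_self 0 one_ne_zero]

theorem stdNormalCDF_nonneg (x : ℝ) : 0 ≤ stdNormalCDF x :=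
  setIntegral_nonneg measurableSet_Iic fun t _ => (stdNormalPDF_pos t).le

theorem half_le_stdNormalCDF {x : ℝ} (hx : 0 ≤ x) : 1 / 2 ≤ stdNormalCDF x :=
  stdNormalCDF_zero ▸ monotone_stdNormalCDF hx

theorem neg_log_two_le_log_stdNormalCDF {x : ℝ} (hx : 0 ≤ x) :
    -log 2 ≤ log (stdNormalCDF x) := by
  rw [← log_inv, inv_eq_one_div]
  exact log_le_log (by norm_num) (half_le_stdNormalCDF hx)

theorem strictAntiOn_stdNormalPDF_div_stdNormalCDF :
    StrictAntiOn (fun x => stdNormalPDF x / stdNormalCDF x) (Ici 0) := fun x hx _ hy hxy =>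
  div_lt_div₀ (strictAntiOn_stdNormalPDF hx hy hxy) (monotone_stdNormalCDF hxy.le)
    (stdNormalPDF_pos x).le (one_half_pos.trans_le (half_le_stdNormalCDF hx))

theorem sq_stdNormalPDF_div_stdNormalCDF_lt {x : ℝ} (hx : 0 < x) :
    (stdNormalPDF x / stdNormalCDF x) ^ 2 < 2 / π := by
  have ratio_nonneg : 0 ≤ stdNormalPDF x / stdNormalCDF x :=
    div_nonneg (stdNormalPDF_pos x).le (stdNormalCDF_nonneg x)
  calc (stdNormalPDF x / stdNormalCDF x) ^ 2 < (stdNormalPDF 0 / stdNormalCDF 0) ^ 2 :=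
        pow_lt_pow_left₀ (strictAntiOn_stdNormalPDF_div_stdNormalCDF self_mem_Ici hx.le hx)
          ratio_nonneg two_ne_zero
    _ = 2 / π := by
        rw [stdNormalPDF_zero, stdNormalCDF_zero, div_pow, div_pow, sq_sqrt (by positivity)]
        field_simp

theorem pos_of_eq_mul_stdNormalPDF_div_stdNormalCDF {a x : ℝ} (ha : 0 < a)
    (h : x = a * (stdNormalPDF x / stdNormalCDF x)) : 0 < x := by
  have x_nonneg : 0 ≤ x :=
    h ▸ mul_nonneg ha.le (div_nonneg (stdNormalPDF_pos x).le (stdNormalCDF_nonneg x))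
  have cdf_pos : 0 < stdNormalCDF x := one_half_pos.trans_le (half_le_stdNormalCDF x_nonneg)
  exact h ▸ mul_pos ha (div_pos (stdNormalPDF_pos x) cdf_pos)

theorem cor_PP_bounds_general {K x₀ : ℝ} (hK : 2 < K)
    (heq : x₀ = (K - 2) / 2 * (stdNormalPDF x₀ / stdNormalCDF x₀)) :
    -x₀ ^ 2 + (K - 2) * log (stdNormalCDF x₀) > -(K - 2) ^ 2 / (2 * π) - (K - 2) * log 2 ∧
      1 + K * (K - 2) / 4 * (stdNormalPDF x₀ / stdNormalCDF x₀) ^ 2 <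
        1 + K * (K - 2) / (2 * π) := by
  have hK₂ : 0 < K - 2 := sub_pos.mpr hK
  have hx₀ : 0 < x₀ := pos_of_eq_mul_stdNormalPDF_div_stdNormalCDF (half_pos hK₂) heq
  have ratio_sq_lt := sq_stdNormalPDF_div_stdNormalCDF_lt hx₀
  constructor
  · have x₀_sq_lt : x₀ ^ 2 < (K - 2) ^ 2 / (2 * π) := calc
      x₀ ^ 2 = ((K - 2) / 2) ^ 2 * (stdNormalPDF x₀ / stdNormalCDF x₀) ^ 2 := by
        rw [← mul_pow, ← heq]
      _ < ((K - 2) / 2) ^ 2 * (2 / π) := by gcongr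
      _ = (K - 2) ^ 2 / (2 * π) := by field_simp
    have log_bound := mul_le_mul_of_nonneg_left (neg_log_two_le_log_stdNormalCDF hx₀.le) hK₂.le
    rw [neg_div]
    linarith
  · calc 1 + K * (K - 2) / 4 * (stdNormalPDF x₀ / stdNormalCDF x₀) ^ 2
        < 1 + K * (K - 2) / 4 * (2 / π) := by gcongr
      _ = 1 + K * (K - 2) / (2 * π) := by
        field_simp
        ring

/-- **The two bounds proved in Corollary 7 (cor_PP).** Let `K ≥ 3` and suppose `x₀ > 0`
satisfies `x₀ = ((K-2)/2)·φ(x₀)/Φ(x₀)`. Then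
`-x₀² + (K-2)·log Φ(x₀) > -(K-2)²/(2π) - (K-2)·log 2`, and
`1 + (K(K-2)/4)·(φ(x₀)/Φ(x₀))² ≤ 1 + K(K-2)/(2π)`. -/
theorem cor_PP_bounds (K : ℕ) (hK : 3 ≤ K) (x₀ : ℝ) (hx₀ : 0 < x₀)
    (heq : x₀ = (((K : ℝ) - 2) / 2) * (stdNormalPDF x₀ / stdNormalCDF x₀)) :
    (-x₀ ^ 2 + ((K : ℝ) - 2) * Real.log (stdNormalCDF x₀)
        > -((K : ℝ) - 2) ^ 2 / (2 * Real.pi) - ((K : ℝ) - 2) * Real.log 2)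
    ∧ 1 + ((K : ℝ) * ((K : ℝ) - 2) / 4) * (stdNormalPDF x₀ / stdNormalCDF x₀) ^ 2
        ≤ 1 + (K : ℝ) * ((K : ℝ) - 2) / (2 * Real.pi) := by
  have hK' : (2 : ℝ) < K := by exact_mod_cast hK
  exact (cor_PP_bounds_general hK' heq).imp_right le_of_lt
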